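/- Let d ≥ 1, let f, g : ℝ^d → ℝ^d satisfy f(0) = g(0) = 0 and the local Lipschitz condition with nondecreasing constants L_R, let p ∈ (0,1) and λ > 0 be such that Φ_{f,g}(x) ≤ −λ for all x ≠ 0, and let h : (0,Δ₀] → (0,∞) be decreasing with h(Δ) → ∞ and L_{h(Δ)}⁴·Δ → 0 as Δ → 0⁺. Then for every ε ∈ (0,λ) there exists Δ* ∈ (0,Δ₀] such that for every Δ ∈ (0,Δ*), the following holds on any probability space (Ω,ℱ,P): if 𝒢 ⊆ ℱ is a sub-σ-algebra, X is a 𝒢-measurable ℝ^d-valued random variable with E|X|^p < ∞, and ξ is a real Gaussian random variable with mean 0 and variance Δ independent of 𝒢, then E[|X + f_{h(Δ)}(X)·Δ + g_{h(Δ)}(X)·ξ|^p | 𝒢] ≤ (1 − p(λ−ε)Δ)·|X|^p almost surely. -/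

import Mathlib

open Set Filter MeasureTheory ProbabilityTheory
open scoped RealInnerProductSpace

/-- The modified truncated function `f_h`. -/
noncomputable def trunc {d : ℕ} (f : EuclideanSpace ℝ (Fin d) → EuclideanSpace ℝ (Fin d))
    (h : ℝ) (x : EuclideanSpace ℝ (Fin d)) : EuclideanSpace ℝ (Fin d) :=
  if ‖x‖ ≤ h then f x else (‖x‖ / h) • f ((h / ‖x‖) • x)

/-- The dissipativity functional `Φ_{f,g}`. -/
noncomputable def Phi {d : ℕ} (f g : EuclideanSpace ℝ (Fin d) → EuclideanSpace ℝ (Fin d))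
    (p : ℝ) (x : EuclideanSpace ℝ (Fin d)) : ℝ :=
  (⟪x, f x⟫ + (1 / 2) * ‖g x‖ ^ 2) / ‖x‖ ^ 2 + ((p - 2) / 2) * ⟪x, g x⟫ ^ 2 / ‖x‖ ^ 4


lemma bern_neg {y s : ℝ} (hy : 0 < y) (hs : s ≤ 0) : 1 + s * (y - 1) ≤ y ^ s := by
  rw [Real.rpow_def_of_pos hy]
  have h1 := Real.add_one_le_exp (Real.log y * s)
  have h2 := Real.log_le_sub_one_of_pos hy
  nlinarith

lemma taylor_pos {r y : ℝ} (hr0 : 0 < r) (hr1 : r < 1) (hy : 0 < y) :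
    y ^ r ≤ 1 + r * (y - 1) + r * (r - 1) / 2 * (y - 1) ^ 2
      + r * (r - 1) * (r - 2) / 6 * (y - 1) ^ 3 := by
  set F : ℝ → ℝ := fun y => 1 + r * (y - 1) + r * (r - 1) / 2 * (y - 1) ^ 2
      + r * (r - 1) * (r - 2) / 6 * (y - 1) ^ 3 - y ^ r with hF
  set F1 : ℝ → ℝ := fun y => r + r * (r - 1) * (y - 1)
      + r * (r - 1) * (r - 2) / 2 * (y - 1) ^ 2 - r * y ^ (r - 1) with hF1
  set F2 : ℝ → ℝ := fun y => r * (r - 1)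
      + r * (r - 1) * (r - 2) * (y - 1) - r * ((r - 1) * y ^ (r - 1 - 1)) with hF2
  have d0 : ∀ y : ℝ, HasDerivAt (fun y : ℝ => y - 1) 1 y := fun y => (hasDerivAt_id y).sub_const 1
  have d1 : ∀ y : ℝ, 0 < y → HasDerivAt F (F1 y) y := by
    intro y hy
    have := (((((d0 y).const_mul r).const_add 1).add (((d0 y).pow 2).const_mul (r * (r - 1) / 2))).add
      (((d0 y).pow 3).const_mul (r * (r - 1) * (r - 2) / 6))).sub
      (Real.hasDerivAt_rpow_const (x := y) (p := r) (Or.inl hy.ne'))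
    refine this.congr_deriv ?_
    simp only [hF1]; push_cast; ring
  have d2 : ∀ y : ℝ, 0 < y → HasDerivAt F1 (F2 y) y := by
    intro y hy
    have := ((((d0 y).const_mul (r * (r - 1))).const_add r).add
      (((d0 y).pow 2).const_mul (r * (r - 1) * (r - 2) / 2))).sub
      ((Real.hasDerivAt_rpow_const (x := y) (p := r - 1) (Or.inl hy.ne')).const_mul r)
    refine this.congr_deriv ?_
    simp only [hF2]; push_cast; ring
  have hconv : ConvexOn ℝ (Ioi 0) F := by
    refine convexOn_of_hasDerivWithinAt2_nonneg (f' := F1) (f'' := F2) (convex_Ioi 0) ?_ ?_ ?_ ?_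
    · exact fun y hy => (d1 y hy).continuousAt.continuousWithinAt
    · intro y hy; rw [interior_Ioi] at hy; exact (d1 y hy).hasDerivWithinAt
    · intro y hy; rw [interior_Ioi] at hy; exact (d2 y hy).hasDerivWithinAt
    · intro y hy; rw [interior_Ioi] at hy
      have := bern_neg (s := r - 1 - 1) hy (by linarith)
      have h3 : 0 ≤ r * (1 - r) := by nlinarith
      simp only [hF2]
      nlinarith [mul_le_mul_of_nonneg_left this h3]
  have hmin := hconv.isMinOn_of_rightDeriv_eq_zero (x := 1) (by rw [interior_Ioi]; simp)
    (by
      rw [(d1 1 one_pos).hasDerivWithinAt.derivWithin (uniqueDiffWithinAt_Ioi 1)]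
      simp [hF1])
  have h1 := hmin (show y ∈ Ioi 0 from hy)
  simp [hF] at h1
  linarith

lemma taylor {r u : ℝ} (hr0 : 0 < r) (hr1 : r < 1) (hu : -1 ≤ u) :
    (1 + u) ^ r ≤ 1 + r * u + r * (r - 1) / 2 * u ^ 2
      + r * (r - 1) * (r - 2) / 6 * u ^ 3 := by
  rcases hu.eq_or_lt with rfl | hu
  · rw [show (1:ℝ) + -1 = 0 by ring, Real.zero_rpow hr0.ne']
    have : 1 + r * -1 + r * (r - 1) / 2 * (-1) ^ 2 + r * (r - 1) * (r - 2) / 6 * (-1) ^ 3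
      = (1 - r) * (1 - r / 2 - r * (2 - r) / 6) := by ring
    rw [this]
    apply mul_nonneg <;> nlinarith
  · have := taylor_pos hr0 hr1 (show 0 < 1 + u by linarith)
    simpa using this

lemma weights {p : ℝ} (hp0 : 0 < p) (hp1 : p < 1) :
    (p / 2) * (1 - p / 2) / 2 ≤ p / 4 ∧ (p / 2) * (p / 2 - 1) * (p / 2 - 2) / 6 ≤ p / 6 := by
  constructor
  · nlinarith
  · have : (p / 2 - 1) * (p / 2 - 2) ≤ 2 := by nlinarith
    nlinarith

set_option maxHeartbeats 1000000 in
lemma arith {Δ K α A β c B p : ℝ} (hΔ : 0 < Δ) (hK : 1 ≤ K) (hKΔ : K ^ 4 * Δ ≤ 1)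
    (hα : |α| ≤ K) (hA0 : 0 ≤ A) (hA : A ≤ K) (hβ : |β| ≤ K) (hc : |c| ≤ K ^ 2)
    (hB0 : 0 ≤ B) (hB : B ≤ K) (hp0 : 0 < p) (hp1 : p < 1) (s t q : ℝ)
    (hs : s = 2 * α * Δ + A ^ 2 * Δ ^ 2) (ht : t = 2 * β + 2 * c * Δ) (hq : q = B ^ 2) :
    1 + p / 2 * (s + q * Δ) + (p / 2) * (p / 2 - 1) / 2 * (s ^ 2 + t ^ 2 * Δ + 3 * q ^ 2 * Δ ^ 2 + 2 * s * q * Δ)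
     + (p / 2) * (p / 2 - 1) * (p / 2 - 2) / 6 * (s ^ 3 + 3 * s * t ^ 2 * Δ + 3 * s ^ 2 * q * Δ
        + 9 * t ^ 2 * q * Δ ^ 2 + 9 * s * q ^ 2 * Δ ^ 2 + 15 * q ^ 3 * Δ ^ 3)
    ≤ 1 + p * Δ * (α + B ^ 2 / 2 + (p - 2) / 2 * β ^ 2) + 68 * p * (K ^ 4 * Δ ^ 2) := by
  have hK0 : 0 < K := by linarith
  have k1 : K ≤ K ^ 4 := le_self_pow₀ hK (by norm_num)
  have k2 : K ^ 2 ≤ K ^ 4 := pow_le_pow_right₀ hK (by norm_num)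
  have k3 : K ^ 3 ≤ K ^ 4 := pow_le_pow_right₀ hK (by norm_num)
  have e1 : K * Δ ≤ 1 := le_trans (by gcongr) hKΔ
  have e2 : K ^ 2 * Δ ≤ 1 := le_trans (by gcongr) hKΔ
  have e3 : K ^ 3 * Δ ≤ 1 := le_trans (by gcongr) hKΔ
  have hA2 : A ^ 2 ≤ K ^ 2 := by gcongr
  have hsK : |s| ≤ 3 * (K * Δ) := by
    rw [hs]
    calc |2 * α * Δ + A ^ 2 * Δ ^ 2| ≤ |2 * α * Δ| + |A ^ 2 * Δ ^ 2| := abs_add_le _ _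
      _ = 2 * |α| * Δ + A ^ 2 * Δ ^ 2 := by
        rw [abs_mul, abs_mul, abs_of_pos hΔ, abs_of_nonneg (by positivity : 0 ≤ A ^ 2 * Δ ^ 2)]; norm_num
      _ ≤ 2 * K * Δ + K ^ 2 * Δ ^ 2 := by gcongr
      _ = 2 * (K * Δ) + (K * Δ) * (K * Δ) := by ring
      _ ≤ 2 * (K * Δ) + (K * Δ) * 1 := by gcongr
      _ = 3 * (K * Δ) := by ring
  have htK : |t| ≤ 4 * K := by
    rw [ht]
    calc |2 * β + 2 * c * Δ| ≤ |2 * β| + |2 * c * Δ| := abs_add_le _ _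
      _ = 2 * |β| + 2 * |c| * Δ := by
        rw [abs_mul, abs_mul, abs_mul, abs_of_pos hΔ]; norm_num
      _ ≤ 2 * K + 2 * K ^ 2 * Δ := by gcongr
      _ ≤ 4 * K := by linarith
  have hq0 : 0 ≤ q := by rw [hq]; positivity
  have hqK : q ≤ K ^ 2 := by rw [hq]; gcongr
  have ht2 : t ^ 2 ≤ 16 * K ^ 2 := by
    rw [← sq_abs]; calc |t| ^ 2 ≤ (4 * K) ^ 2 := by gcongr
      _ = _ := by ring
  have hs2 : s ^ 2 ≤ 9 * (K * Δ) ^ 2 := by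
    rw [← sq_abs]; calc |s| ^ 2 ≤ (3 * (K * Δ)) ^ 2 := by gcongr
      _ = _ := by ring
  have hs1 : s ≤ 3 * (K * Δ) := le_trans (le_abs_self s) hsK
  have hs1' : -(3 * (K * Δ)) ≤ s := neg_le_of_abs_le hsK
  -- cubic
  have c1 : s ^ 3 ≤ 27 * (K ^ 4 * Δ ^ 2) := by
    calc s ^ 3 ≤ |s| ^ 3 := by rw [← abs_pow]; exact le_abs_self _
      _ ≤ (3 * (K * Δ)) ^ 3 := by gcongr
      _ = 27 * (K ^ 2 * Δ ^ 2) * (K * Δ) := by ring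
      _ ≤ 27 * (K ^ 4 * Δ ^ 2) * 1 := by gcongr
      _ = _ := by ring
  have c2 : 3 * s * t ^ 2 * Δ ≤ 144 * (K ^ 4 * Δ ^ 2) := by
    calc 3 * s * t ^ 2 * Δ ≤ 3 * (3 * (K * Δ)) * (16 * K ^ 2) * Δ := by gcongr
      _ = 144 * (K ^ 3 * Δ ^ 2) := by ring
      _ ≤ _ := by gcongr
  have c3 : 3 * s ^ 2 * q * Δ ≤ 27 * (K ^ 4 * Δ ^ 2) := by
    calc 3 * s ^ 2 * q * Δ ≤ 3 * (9 * (K * Δ) ^ 2) * K ^ 2 * Δ := by gcongr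
      _ = 27 * (K ^ 2 * Δ ^ 2) * (K ^ 2 * Δ) := by ring
      _ ≤ 27 * (K ^ 4 * Δ ^ 2) * 1 := by gcongr
      _ = _ := by ring
  have c4 : 9 * t ^ 2 * q * Δ ^ 2 ≤ 144 * (K ^ 4 * Δ ^ 2) := by
    calc 9 * t ^ 2 * q * Δ ^ 2 ≤ 9 * (16 * K ^ 2) * K ^ 2 * Δ ^ 2 := by gcongr
      _ = _ := by ring
  have c5 : 9 * s * q ^ 2 * Δ ^ 2 ≤ 27 * (K ^ 4 * Δ ^ 2) := by
    calc 9 * s * q ^ 2 * Δ ^ 2 ≤ 9 * (3 * (K * Δ)) * (K ^ 2) ^ 2 * Δ ^ 2 := by gcongr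
      _ = 27 * (K ^ 4 * Δ ^ 2) * (K * Δ) := by ring
      _ ≤ 27 * (K ^ 4 * Δ ^ 2) * 1 := by gcongr
      _ = _ := by ring
  have c6 : 15 * q ^ 3 * Δ ^ 3 ≤ 15 * (K ^ 4 * Δ ^ 2) := by
    calc 15 * q ^ 3 * Δ ^ 3 ≤ 15 * (K ^ 2) ^ 3 * Δ ^ 3 := by gcongr
      _ = 15 * (K ^ 4 * Δ ^ 2) * (K ^ 2 * Δ) := by ring
      _ ≤ 15 * (K ^ 4 * Δ ^ 2) * 1 := by gcongr
      _ = _ := by ring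
  -- quadratic
  have q1 : -(6 * (K ^ 4 * Δ ^ 2)) ≤ 2 * s * q * Δ := by
    have : 2 * (-s) * q * Δ ≤ 6 * (K ^ 4 * Δ ^ 2) := by
      calc 2 * (-s) * q * Δ ≤ 2 * (3 * (K * Δ)) * K ^ 2 * Δ := by
            gcongr; linarith
        _ = 6 * (K ^ 3 * Δ ^ 2) := by ring
        _ ≤ _ := by gcongr
    linarith
  have q2 : 4 * β ^ 2 * Δ - 8 * (K ^ 4 * Δ ^ 2) ≤ t ^ 2 * Δ := by
    have h1 : -(β * c) ≤ K * K ^ 2 := by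
      calc -(β * c) ≤ |β * c| := neg_le_abs _
        _ = |β| * |c| := abs_mul _ _
        _ ≤ _ := by gcongr
    have h2 : -(β * c) * Δ ^ 2 ≤ K ^ 4 * Δ ^ 2 := by
      gcongr; linarith
    have h3 : 0 ≤ c ^ 2 * Δ ^ 3 := by positivity
    have h4 : t ^ 2 * Δ = 4 * β ^ 2 * Δ - 8 * (-(β * c) * Δ ^ 2) + 4 * (c ^ 2 * Δ ^ 3) := by rw [ht]; ring
    linarith
  have Q : 4 * β ^ 2 * Δ - 14 * (K ^ 4 * Δ ^ 2) ≤ s ^ 2 + t ^ 2 * Δ + 3 * q ^ 2 * Δ ^ 2 + 2 * s * q * Δ := by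
    have : 0 ≤ s ^ 2 := sq_nonneg _
    have : 0 ≤ 3 * q ^ 2 * Δ ^ 2 := by positivity
    linarith
  have Cc : s ^ 3 + 3 * s * t ^ 2 * Δ + 3 * s ^ 2 * q * Δ
        + 9 * t ^ 2 * q * Δ ^ 2 + 9 * s * q ^ 2 * Δ ^ 2 + 15 * q ^ 3 * Δ ^ 3 ≤ 384 * (K ^ 4 * Δ ^ 2) := by
    linarith
  have l1 : A ^ 2 * Δ ^ 2 ≤ K ^ 4 * Δ ^ 2 := by gcongr; linarith
  set M := K ^ 4 * Δ ^ 2 with hM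
  have hM0 : 0 ≤ M := by positivity
  clear_value M
  have w2 : 0 ≤ (p / 2) * (1 - p / 2) / 2 := by
    have : 0 ≤ 1 - p / 2 := by linarith
    positivity
  have w3 : 0 ≤ (p / 2) * (p / 2 - 1) * (p / 2 - 2) / 6 := by
    have h1 : 0 ≤ 1 - p / 2 := by linarith
    have h2 : 0 ≤ 2 - p / 2 := by linarith
    have h3 : 0 ≤ (p / 2) * (1 - p / 2) * (2 - p / 2) / 6 := by positivity
    have h4 : (p / 2) * (p / 2 - 1) * (p / 2 - 2) / 6 = (p / 2) * (1 - p / 2) * (2 - p / 2) / 6 := by ring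
    rw [h4]; exact h3
  obtain ⟨w2', w3'⟩ := weights hp0 hp1
  have r2 := mul_le_mul_of_nonneg_left Q w2
  have r3 := mul_le_mul_of_nonneg_left Cc w3
  have r2' := mul_le_mul_of_nonneg_right w2' hM0
  have r3' := mul_le_mul_of_nonneg_right w3' hM0
  have r1 := mul_le_mul_of_nonneg_left l1 hp0.le
  generalize s ^ 3 + 3 * s * t ^ 2 * Δ + 3 * s ^ 2 * q * Δ
        + 9 * t ^ 2 * q * Δ ^ 2 + 9 * s * q ^ 2 * Δ ^ 2 + 15 * q ^ 3 * Δ ^ 3 = CC at *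
  generalize s ^ 2 + t ^ 2 * Δ + 3 * q ^ 2 * Δ ^ 2 + 2 * s * q * Δ = QQ at *
  have hs' : p / 2 * (s + q * Δ) = p * α * Δ + p * (A ^ 2 * Δ ^ 2) / 2 + p * Δ * B ^ 2 / 2 := by
    rw [hs, hq]; ring
  rw [hs']
  have hpM : 0 ≤ p * M := by positivity
  have r4 : (p / 2) * (1 - p / 2) / 2 * (4 * β ^ 2 * Δ) = - (p * Δ * ((p - 2) / 2 * β ^ 2)) := by ring
  linarith

lemma mom_step (v : NNReal) (n : ℕ) (Q Q' : ℝ → ℝ)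
    (h : ∀ t, ∫ x, x ^ n * Real.exp (t * x) ∂(gaussianReal 0 v) = Q t * Real.exp (v * t ^ 2 / 2))
    (hQ : ∀ t, HasDerivAt Q (Q' t) t) (t : ℝ) :
    ∫ x, x ^ (n + 1) * Real.exp (t * x) ∂(gaussianReal 0 v)
      = (Q' t + v * t * Q t) * Real.exp (v * t ^ 2 / 2) := by
  have h1 := hasDerivAt_integral_pow_mul_exp_real (X := id) (μ := gaussianReal 0 v) (t := t)
    (by rw [integrableExpSet_id_gaussianReal]; simp) n
  simp only [id] at h1
  have h2 : HasDerivAt (fun t : ℝ => Q t * Real.exp (v * t ^ 2 / 2)) _ t :=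
    (hQ t).mul ((((hasDerivAt_id t).pow 2).const_mul (v:ℝ)).div_const 2).exp
  rw [funext h] at h1
  rw [h1.unique h2]
  simp only [id, Pi.pow_apply]
  push_cast
  ring

lemma moments (v : NNReal) :
    (∫ x, x ^ 1 ∂(gaussianReal 0 v) = 0) ∧ (∫ x, x ^ 2 ∂(gaussianReal 0 v) = v) ∧
    (∫ x, x ^ 3 ∂(gaussianReal 0 v) = 0) ∧ (∫ x, x ^ 4 ∂(gaussianReal 0 v) = 3 * v ^ 2) ∧
    (∫ x, x ^ 5 ∂(gaussianReal 0 v) = 0) ∧ (∫ x, x ^ 6 ∂(gaussianReal 0 v) = 15 * v ^ 3) := by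
  have h0 : ∀ t, ∫ x, x ^ 0 * Real.exp (t * x) ∂(gaussianReal 0 v)
      = (fun _ => (1:ℝ)) t * Real.exp (v * t ^ 2 / 2) := by
    intro t
    have := congrFun (mgf_id_gaussianReal (μ := 0) (v := v)) t
    simpa [mgf] using this
  have hp : ∀ (c : ℝ) (n : ℕ) (t : ℝ), HasDerivAt (fun t : ℝ => c * t ^ n) (c * (n * t ^ (n - 1))) t :=
    fun c n t => (hasDerivAt_pow n t).const_mul c
  have h1 := mom_step v 0 _ (fun _ => 0) h0 (fun t => hasDerivAt_const t _)
  have h2 := mom_step v 1 (fun t => v * t ^ 1) _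
    (fun t => by rw [h1 t]; ring_nf) (fun t => hp v 1 t)
  have h3 := mom_step v 2 (fun t => v * t ^ 0 + v ^ 2 * t ^ 2) _
    (fun t => by rw [h2 t]; push_cast; ring_nf) (fun t => (hp v 0 t).add (hp (v ^ 2) 2 t))
  have h4 := mom_step v 3 (fun t => 3 * v ^ 2 * t ^ 1 + v ^ 3 * t ^ 3) _
    (fun t => by rw [h3 t]; push_cast; ring_nf) (fun t => (hp (3 * v ^ 2) 1 t).add (hp (v ^ 3) 3 t))
  have h5 := mom_step v 4 (fun t => 3 * v ^ 2 * t ^ 0 + 6 * v ^ 3 * t ^ 2 + v ^ 4 * t ^ 4) _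
    (fun t => by rw [h4 t]; push_cast; ring_nf)
    (fun t => ((hp (3 * v ^ 2) 0 t).add (hp (6 * v ^ 3) 2 t)).add (hp (v ^ 4) 4 t))
  have h6 := mom_step v 5 (fun t => 15 * v ^ 3 * t ^ 1 + 10 * v ^ 4 * t ^ 3 + v ^ 5 * t ^ 5) _
    (fun t => by rw [h5 t]; push_cast; ring_nf)
    (fun t => ((hp (15 * v ^ 3) 1 t).add (hp (10 * v ^ 4) 3 t)).add (hp (v ^ 5) 5 t))
  refine ⟨?_, ?_, ?_, ?_, ?_, ?_⟩
  · simpa using h1 0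
  · simpa using h2 0
  · simpa using h3 0
  · simpa using h4 0
  · simpa using h5 0
  · simpa using h6 0

lemma int_pow (v : NNReal) (n : ℕ) : Integrable (fun x : ℝ => x ^ n) (gaussianReal 0 v) := by
  have := integrable_pow_of_mem_interior_integrableExpSet (X := id) (μ := gaussianReal 0 v)
    (by rw [integrableExpSet_id_gaussianReal]; simp) n
  simpa using this

lemma condExp_poly {Ω : Type} [mΩ : MeasurableSpace Ω] (P : Measure Ω) [IsProbabilityMeasure P]
    (𝒢 : MeasurableSpace Ω) (hle : 𝒢 ≤ mΩ) (ξ : Ω → ℝ) (hξ : Measurable[mΩ] ξ) (v : NNReal)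
    (hmap : @Measure.map Ω ℝ mΩ Real.measurableSpace ξ P = gaussianReal 0 v)
    (hind : Indep (MeasurableSpace.comap ξ Real.measurableSpace) 𝒢 P)
    (N : ℕ) (C : ℕ → Ω → ℝ) (hC : ∀ k, StronglyMeasurable[𝒢] (C k))
    (hCi : ∀ k, Integrable (C k) P) :
    Integrable (fun ω => ∑ k ∈ Finset.range N, C k ω * ξ ω ^ k) P ∧
    P[fun ω => ∑ k ∈ Finset.range N, C k ω * ξ ω ^ k | 𝒢] =ᵐ[P]
      fun ω => ∑ k ∈ Finset.range N, C k ω * ∫ x, x ^ k ∂(gaussianReal 0 v) := by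
  have hξi : ∀ k : ℕ, Integrable (fun ω => ξ ω ^ k) P := by
    intro k
    have := int_pow v k
    rw [← hmap] at this
    exact this.comp_measurable hξ
  have hmean : ∀ k : ℕ, ∫ ω, ξ ω ^ k ∂P = ∫ x, x ^ k ∂(gaussianReal 0 v) := by
    intro k
    rw [← hmap, integral_map hξ.aemeasurable (by fun_prop)]
  have hsm : ∀ k : ℕ, StronglyMeasurable[MeasurableSpace.comap ξ Real.measurableSpace] (fun ω => ξ ω ^ k) := by
    intro k
    have : Measurable[MeasurableSpace.comap ξ Real.measurableSpace] ξ := comap_measurable ξ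
    exact (this.pow_const k).stronglyMeasurable
  have hprod : ∀ k : ℕ, Integrable (fun ω => C k ω * ξ ω ^ k) P := by
    intro k
    have hi : IndepFun (C k) (fun ω => ξ ω ^ k) P := by
      rw [IndepFun_iff_Indep]
      refine indep_of_indep_of_le_left (indep_of_indep_of_le_right hind.symm ?_) ?_
      · exact (hsm k).measurable.comap_le
      · exact (hC k).measurable.comap_le
    exact hi.integrable_mul (hCi k) (hξi k)
  refine ⟨integrable_finsetSum _ fun k _ => hprod k, ?_⟩
  have h1 : P[∑ k ∈ Finset.range N, fun ω => C k ω * ξ ω ^ k | 𝒢] =ᵐ[P] _ :=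
    condExp_finsetSum (fun k _ => hprod k) 𝒢
  have h2 : ∀ k : ℕ, P[fun ω => C k ω * ξ ω ^ k | 𝒢] =ᵐ[P] fun ω => C k ω * ∫ x, x ^ k ∂(gaussianReal 0 v) := by
    intro k
    have a1 := condExp_mul_of_stronglyMeasurable_left (hC k) (hprod k) (hξi k)
    have a2 := condExp_indep_eq hξ.comap_le hle (hsm k) hind
    filter_upwards [a1, a2] with ω b1 b2
    have b1' : P[fun ω => C k ω * ξ ω ^ k | 𝒢] ω = _ := b1
    rw [b1', Pi.mul_apply, b2, hmean]
  have h3 : (fun ω => ∑ k ∈ Finset.range N, C k ω * ξ ω ^ k) = ∑ k ∈ Finset.range N, fun ω => C k ω * ξ ω ^ k := by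
    ext ω; simp
  rw [h3]
  have h4 := ae_all_iff.2 h2
  filter_upwards [h1, h4] with ω b1 b2
  rw [b1, Finset.sum_apply]
  exact Finset.sum_congr rfl fun k _ => b2 k

lemma trunc_bound {d : ℕ} (f : EuclideanSpace ℝ (Fin d) → EuclideanSpace ℝ (Fin d)) (h K : ℝ)
    (hh : 0 < h) (hf : ∀ x, ‖x‖ ≤ h → ‖f x‖ ≤ K * ‖x‖) (x : EuclideanSpace ℝ (Fin d)) :
    ‖trunc f h x‖ ≤ K * ‖x‖ := by
  unfold trunc
  split_ifs with hx
  · exact hf x hx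
  · push Not at hx
    have hx0 : 0 < ‖x‖ := hh.trans hx
    have hn : ‖(h / ‖x‖) • x‖ = h := by
      rw [norm_smul, Real.norm_of_nonneg (by positivity)]; field_simp
    have := hf ((h / ‖x‖) • x) hn.le
    rw [hn] at this
    rw [norm_smul, Real.norm_of_nonneg (by positivity)]
    calc ‖x‖ / h * ‖f ((h / ‖x‖) • x)‖ ≤ ‖x‖ / h * (K * h) := by gcongr
      _ = K * ‖x‖ := by field_simp

lemma trunc_meas {d : ℕ} (f : EuclideanSpace ℝ (Fin d) → EuclideanSpace ℝ (Fin d)) (h : ℝ)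
    (hf : Measurable f) : Measurable (trunc f h) := by
  unfold trunc
  refine Measurable.ite (measurableSet_le measurable_norm measurable_const) hf ?_
  have h1 : Measurable fun x : EuclideanSpace ℝ (Fin d) => ‖x‖ / h := measurable_norm.div_const h
  have h2 : Measurable fun x : EuclideanSpace ℝ (Fin d) => h / ‖x‖ := measurable_const.div measurable_norm
  exact h1.smul (hf.comp (h2.smul measurable_id))

lemma Phi_trunc {d : ℕ} (f g : EuclideanSpace ℝ (Fin d) → EuclideanSpace ℝ (Fin d)) (h p lam : ℝ)
    (hh : 0 < h) (hPhi : ∀ x : EuclideanSpace ℝ (Fin d), x ≠ 0 → Phi f g p x ≤ -lam)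
    (x : EuclideanSpace ℝ (Fin d)) (hx : x ≠ 0) :
    Phi (trunc f h) (trunc g h) p x ≤ -lam := by
  by_cases hxh : ‖x‖ ≤ h
  · have := hPhi x hx
    unfold Phi at this ⊢
    simpa [trunc, hxh] using this
  · have hx0 : 0 < ‖x‖ := norm_pos_iff.2 hx
    have hc : h / ‖x‖ ≠ 0 := by positivity
    have := hPhi ((h / ‖x‖) • x) (smul_ne_zero hc hx)
    refine le_trans (le_of_eq ?_) this
    have hn : ‖(h / ‖x‖) • x‖ = h := by
      rw [norm_smul, Real.norm_of_nonneg (by positivity)]; field_simp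
    unfold Phi
    rw [hn]
    simp only [trunc, hxh, if_false, real_inner_smul_left, real_inner_smul_right, norm_smul]
    rw [Real.norm_of_nonneg (by positivity : 0 ≤ ‖x‖ / h)]
    field_simp

lemma norm_expand {d : ℕ} (x a b : EuclideanSpace ℝ (Fin d)) (hx : x ≠ 0) (Δ z : ℝ) :
    ‖x + Δ • a + z • b‖ ^ 2 = ‖x‖ ^ 2 * (1 +
      ((2 * (⟪x, a⟫ / ‖x‖ ^ 2) * Δ + (‖a‖ / ‖x‖) ^ 2 * Δ ^ 2)
       + (2 * (⟪x, b⟫ / ‖x‖ ^ 2) + 2 * (⟪a, b⟫ / ‖x‖ ^ 2) * Δ) * z + (‖b‖ / ‖x‖) ^ 2 * z ^ 2)) := by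
  have hx0 : 0 < ‖x‖ := norm_pos_iff.2 hx
  rw [norm_add_sq_real, norm_add_sq_real, inner_add_left]
  simp only [real_inner_smul_left, real_inner_smul_right, norm_smul, mul_pow, Real.norm_eq_abs, sq_abs]
  field_simp
  ring

lemma pow_bound {d : ℕ} (x a b : EuclideanSpace ℝ (Fin d)) (Δ z p : ℝ) (hp0 : 0 < p) (hp1 : p < 1)
    (s t q : ℝ)
    (hs : s = 2 * (⟪x, a⟫ / ‖x‖ ^ 2) * Δ + (‖a‖ / ‖x‖) ^ 2 * Δ ^ 2)
    (ht : t = 2 * (⟪x, b⟫ / ‖x‖ ^ 2) + 2 * (⟪a, b⟫ / ‖x‖ ^ 2) * Δ)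
    (hq : q = (‖b‖ / ‖x‖) ^ 2) (hx : x ≠ 0) :
    ‖x + Δ • a + z • b‖ ^ p ≤ ‖x‖ ^ p * (1 + (p / 2) * (s + t * z + q * z ^ 2)
      + (p / 2) * (p / 2 - 1) / 2 * (s + t * z + q * z ^ 2) ^ 2
      + (p / 2) * (p / 2 - 1) * (p / 2 - 2) / 6 * (s + t * z + q * z ^ 2) ^ 3) := by
  have hx0 : 0 < ‖x‖ := norm_pos_iff.2 hx
  have h1 := norm_expand x a b hx Δ z
  rw [← hs, ← ht, ← hq] at h1
  have hpow : ∀ y : ℝ, 0 ≤ y → y ^ p = (y ^ 2) ^ (p / 2) := by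
    intro y hy
    rw [← Real.rpow_natCast y 2, ← Real.rpow_mul hy]; congr 1; push_cast; ring
  have hu : 0 ≤ 1 + (s + t * z + q * z ^ 2) := by
    have : 0 ≤ ‖x‖ ^ 2 * (1 + (s + t * z + q * z ^ 2)) := by rw [← h1]; positivity
    exact nonneg_of_mul_nonneg_right this (by positivity)
  rw [hpow _ (norm_nonneg (x + Δ • a + z • b)), h1, Real.mul_rpow (by positivity) hu,
    ← hpow _ (norm_nonneg x)]
  exact mul_le_mul_of_nonneg_left (taylor (by linarith) (by linarith) (by linarith)) (by positivity)

noncomputable def coefC (r1 r2 r3 : ℝ) (k : ℕ) (w : ℝ × ℝ × ℝ) : ℝ :=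
  let s := w.1
  let t := w.2.1
  let q := w.2.2
  match k with
  | 0 => 1 + r1 * s + r2 * s ^ 2 + r3 * s ^ 3
  | 1 => r1 * t + r2 * (2 * s * t) + r3 * (3 * s ^ 2 * t)
  | 2 => r1 * q + r2 * (t ^ 2 + 2 * s * q) + r3 * (3 * s ^ 2 * q + 3 * s * t ^ 2)
  | 3 => r2 * (2 * t * q) + r3 * (t ^ 3 + 6 * s * t * q)
  | 4 => r2 * q ^ 2 + r3 * (3 * s * q ^ 2 + 3 * t ^ 2 * q)
  | 5 => r3 * (3 * t * q ^ 2)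
  | 6 => r3 * q ^ 3
  | _ => 0

lemma coefC_cont (r1 r2 r3 : ℝ) (k : ℕ) : Continuous (coefC r1 r2 r3 k) := by
  unfold coefC
  match k with
  | 0 => dsimp only; fun_prop
  | 1 => dsimp only; fun_prop
  | 2 => dsimp only; fun_prop
  | 3 => dsimp only; fun_prop
  | 4 => dsimp only; fun_prop
  | 5 => dsimp only; fun_prop
  | 6 => dsimp only; fun_prop
  | _ + 7 => dsimp only; fun_prop

lemma coefC_sum (r1 r2 r3 s t q z : ℝ) :
    1 + r1 * (s + t * z + q * z ^ 2) + r2 * (s + t * z + q * z ^ 2) ^ 2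
      + r3 * (s + t * z + q * z ^ 2) ^ 3
    = ∑ k ∈ Finset.range 7, coefC r1 r2 r3 k (s, t, q) * z ^ k := by
  simp only [Finset.sum_range_succ, Finset.sum_range_zero, coefC]
  ring

lemma coefC_mom (r1 r2 r3 s t q : ℝ) (v : NNReal) :
    ∑ k ∈ Finset.range 7, coefC r1 r2 r3 k (s, t, q) * ∫ x, x ^ k ∂(gaussianReal 0 v)
    = 1 + r1 * (s + q * v) + r2 * (s ^ 2 + t ^ 2 * v + 3 * q ^ 2 * v ^ 2 + 2 * s * q * v)
     + r3 * (s ^ 3 + 3 * s * t ^ 2 * v + 3 * s ^ 2 * q * v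
        + 9 * t ^ 2 * q * v ^ 2 + 9 * s * q ^ 2 * v ^ 2 + 15 * q ^ 3 * v ^ 3) := by
  obtain ⟨m1, m2, m3, m4, m5, m6⟩ := moments v
  have m0 : ∫ x : ℝ, x ^ 0 ∂(gaussianReal 0 v) = 1 := by simp
  simp only [Finset.sum_range_succ, Finset.sum_range_zero, coefC, m0, m1, m2, m3, m4, m5, m6]
  ring

lemma div_bound {N m K : ℝ} (hN : 0 ≤ N) (hK : 0 ≤ K) (h : m ≤ K * N) : m / N ≤ K :=
  div_le_of_le_mul₀ hN hK h

lemma step_meas {d : ℕ} (a b : EuclideanSpace ℝ (Fin d) → EuclideanSpace ℝ (Fin d))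
    (ha : Measurable a) (hb : Measurable b) (Δ p : ℝ) {Ω : Type} {mΩ : MeasurableSpace Ω}
    (X : Ω → EuclideanSpace ℝ (Fin d)) (ξ : Ω → ℝ) (hXm : Measurable X) (hξ : Measurable ξ) :
    Measurable fun ω => ‖X ω + Δ • a (X ω) + ξ ω • b (X ω)‖ ^ p := by
  refine Measurable.pow_const (Measurable.norm ?_) p
  exact (hXm.add ((ha.comp hXm).const_smul Δ)).add (hξ.smul (hb.comp hXm))

set_option maxHeartbeats 1000000 in
/-- One-step estimate at a fixed step size. -/
lemma one_step {d : ℕ} (a b : EuclideanSpace ℝ (Fin d) → EuclideanSpace ℝ (Fin d))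
    (ha : Measurable a) (hb : Measurable b) (K Δ p lam ε : ℝ) (hK : 1 ≤ K) (hΔ : 0 < Δ)
    (hKΔ : K ^ 4 * Δ ≤ 1) (hKε : 68 * (K ^ 4 * Δ) ≤ ε) (hp0 : 0 < p) (hp1 : p < 1)
    (haK : ∀ x, ‖a x‖ ≤ K * ‖x‖) (hbK : ∀ x, ‖b x‖ ≤ K * ‖x‖)
    (hPhi : ∀ x : EuclideanSpace ℝ (Fin d), x ≠ 0 → Phi a b p x ≤ -lam)
    (Ω : Type) [mΩ : MeasurableSpace Ω] (P : Measure Ω) [IsProbabilityMeasure P]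
    (𝒢 : MeasurableSpace Ω) (hle : 𝒢 ≤ mΩ)
    (X : Ω → EuclideanSpace ℝ (Fin d)) (hX : Measurable[𝒢] X)
    (hXi : Integrable (fun ω => ‖X ω‖ ^ p) P)
    (ξ : Ω → ℝ) (hξ : Measurable[mΩ] ξ)
    (hmap : @Measure.map Ω ℝ mΩ Real.measurableSpace ξ P = gaussianReal 0 (Real.toNNReal Δ))
    (hind : Indep (MeasurableSpace.comap ξ Real.measurableSpace) 𝒢 P) :
    ∀ᵐ ω ∂P, (P[fun ω' => ‖X ω' + Δ • a (X ω') + ξ ω' • b (X ω')‖ ^ p | 𝒢]) ω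
            ≤ (1 - p * (lam - ε) * Δ) * ‖X ω‖ ^ p := by
  have hK0 : 0 ≤ K := by linarith
  set α : EuclideanSpace ℝ (Fin d) → ℝ := fun x => ⟪x, a x⟫ / ‖x‖ ^ 2 with hα
  set β : EuclideanSpace ℝ (Fin d) → ℝ := fun x => ⟪x, b x⟫ / ‖x‖ ^ 2 with hβ
  set c : EuclideanSpace ℝ (Fin d) → ℝ := fun x => ⟪a x, b x⟫ / ‖x‖ ^ 2 with hc
  set A : EuclideanSpace ℝ (Fin d) → ℝ := fun x => ‖a x‖ / ‖x‖ with hA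
  set B : EuclideanSpace ℝ (Fin d) → ℝ := fun x => ‖b x‖ / ‖x‖ with hB
  have mα : Measurable α := (measurable_id.inner ha).div (measurable_norm.pow_const 2)
  have mβ : Measurable β := (measurable_id.inner hb).div (measurable_norm.pow_const 2)
  have mc : Measurable c := (ha.inner hb).div (measurable_norm.pow_const 2)
  have mA : Measurable A := ha.norm.div measurable_norm
  have mB : Measurable B := hb.norm.div measurable_norm
  have bA0 : ∀ x, 0 ≤ A x := fun x => by positivity
  have bB0 : ∀ x, 0 ≤ B x := fun x => by positivity
  have bA : ∀ x, A x ≤ K := fun x => div_bound (norm_nonneg x) hK0 (haK x)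
  have bB : ∀ x, B x ≤ K := fun x => div_bound (norm_nonneg x) hK0 (hbK x)
  have bα : ∀ x, |α x| ≤ K := by
    intro x
    rw [hα]; simp only [abs_div, abs_pow, abs_norm]
    refine div_bound (by positivity) hK0 ((abs_real_inner_le_norm _ _).trans ?_)
    calc ‖x‖ * ‖a x‖ ≤ ‖x‖ * (K * ‖x‖) := by gcongr; exact haK x
      _ = K * ‖x‖ ^ 2 := by ring
  have bβ : ∀ x, |β x| ≤ K := by
    intro x
    rw [hβ]; simp only [abs_div, abs_pow, abs_norm]
    refine div_bound (by positivity) hK0 ((abs_real_inner_le_norm _ _).trans ?_)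
    calc ‖x‖ * ‖b x‖ ≤ ‖x‖ * (K * ‖x‖) := by gcongr; exact hbK x
      _ = K * ‖x‖ ^ 2 := by ring
  have bc : ∀ x, |c x| ≤ K ^ 2 := by
    intro x
    rw [hc]; simp only [abs_div, abs_pow, abs_norm]
    refine div_bound (by positivity) (by positivity) ((abs_real_inner_le_norm _ _).trans ?_)
    calc ‖a x‖ * ‖b x‖ ≤ (K * ‖x‖) * (K * ‖x‖) := by gcongr; exact haK x; exact hbK x
      _ = K ^ 2 * ‖x‖ ^ 2 := by ring
  set W : EuclideanSpace ℝ (Fin d) → ℝ × ℝ × ℝ := fun x =>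
    (2 * α x * Δ + A x ^ 2 * Δ ^ 2, 2 * β x + 2 * c x * Δ, B x ^ 2) with hW
  have mW : Measurable W := by
    refine Measurable.prodMk ?_ (Measurable.prodMk ?_ ?_)
    · exact ((mα.const_mul 2).mul_const Δ).add ((mA.pow_const 2).mul_const _)
    · exact (mβ.const_mul 2).add ((mc.const_mul 2).mul_const Δ)
    · exact mB.pow_const 2
  set M : ℝ := (2 * K * Δ + K ^ 2 * Δ ^ 2) + (2 * K + 2 * K ^ 2 * Δ) + K ^ 2 with hM
  have bW : ∀ x, W x ∈ Metric.closedBall (0 : ℝ × ℝ × ℝ) M := by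
    intro x
    rw [mem_closedBall_zero_iff]
    have e0 : 0 ≤ 2 * K * Δ + K ^ 2 * Δ ^ 2 := by positivity
    have e1 : 0 ≤ 2 * K + 2 * K ^ 2 * Δ := by positivity
    have e2 : 0 ≤ K ^ 2 := by positivity
    have f0 : |2 * α x * Δ + A x ^ 2 * Δ ^ 2| ≤ 2 * K * Δ + K ^ 2 * Δ ^ 2 := by
      refine (abs_add_le _ _).trans ?_
      rw [abs_mul, abs_mul, abs_mul, abs_of_pos hΔ, abs_pow, abs_of_nonneg (bA0 x),
        abs_of_pos (show 0 < Δ ^ 2 by positivity), abs_two]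
      have := bα x; have := bA x; have := bA0 x
      gcongr
    have f1 : |2 * β x + 2 * c x * Δ| ≤ 2 * K + 2 * K ^ 2 * Δ := by
      refine (abs_add_le _ _).trans ?_
      rw [abs_mul, abs_mul, abs_mul, abs_of_pos hΔ, abs_two]
      have := bβ x; have := bc x
      gcongr
    have f2 : |B x ^ 2| ≤ K ^ 2 := by
      rw [abs_pow, abs_of_nonneg (bB0 x)]
      have := bB x; have := bB0 x
      gcongr
    rw [Prod.norm_def, Prod.norm_def]
    simp only [hW, Real.norm_eq_abs]
    refine max_le ?_ (max_le ?_ ?_) <;> linarith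
  set r1 := p / 2 with hr1
  set r2 := (p / 2) * (p / 2 - 1) / 2 with hr2
  set r3 := (p / 2) * (p / 2 - 1) * (p / 2 - 2) / 6 with hr3
  set C : ℕ → Ω → ℝ := fun k ω => ‖X ω‖ ^ p * coefC r1 r2 r3 k (W (X ω)) with hC
  have mCo : ∀ k, Measurable[𝒢] fun ω => coefC r1 r2 r3 k (W (X ω)) := fun k =>
    (coefC_cont r1 r2 r3 k).measurable.comp (mW.comp hX)
  have mC : ∀ k, StronglyMeasurable[𝒢] (C k) := fun k =>
    ((hX.norm.pow_const p).mul (mCo k)).stronglyMeasurable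
  have iC : ∀ k, Integrable (C k) P := by
    intro k
    obtain ⟨D, hD⟩ := (isCompact_closedBall (0 : ℝ × ℝ × ℝ) M).exists_bound_of_continuousOn
      (coefC_cont r1 r2 r3 k).continuousOn
    exact hXi.mul_bdd (c := D) (Measurable.mono (ma := 𝒢) (ma' := mΩ) (mCo k) hle le_rfl).aestronglyMeasurable
      (ae_of_all _ fun ω => hD _ (bW _))
  obtain ⟨hi, hce⟩ := condExp_poly (mΩ := mΩ) P 𝒢 hle ξ hξ _ hmap hind 7 C mC iC
  have hpt : ∀ ω, ‖X ω + Δ • a (X ω) + ξ ω • b (X ω)‖ ^ p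
      ≤ ∑ k ∈ Finset.range 7, C k ω * ξ ω ^ k := by
    intro ω
    by_cases hx : X ω = 0
    · have h1 : a (X ω) = 0 := by simpa [hx] using haK (X ω)
      have h2 : b (X ω) = 0 := by simpa [hx] using hbK (X ω)
      rw [h1, h2]
      simp [hC, hx, Real.zero_rpow hp0.ne']
    · have := pow_bound (X ω) (a (X ω)) (b (X ω)) Δ (ξ ω) p hp0 hp1 _ _ _ rfl rfl rfl hx
      refine this.trans (le_of_eq ?_)
      rw [coefC_sum, Finset.mul_sum]
      refine Finset.sum_congr rfl fun k _ => ?_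
      simp only [hC, hW, hα, hβ, hc, hA, hB]
      ring
  have hXm : Measurable[mΩ] X := Measurable.mono (ma := 𝒢) (ma' := mΩ) hX hle le_rfl
  have hYm : Measurable[mΩ] fun ω => ‖X ω + Δ • a (X ω) + ξ ω • b (X ω)‖ ^ p := step_meas a b ha hb Δ p X ξ hXm hξ
  have hYi : Integrable (fun ω => ‖X ω + Δ • a (X ω) + ξ ω • b (X ω)‖ ^ p) P := by
    refine hi.mono' hYm.aestronglyMeasurable (ae_of_all _ fun ω => ?_)
    rw [Real.norm_of_nonneg (by positivity)]
    exact hpt ω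
  have hmono := condExp_mono (m := 𝒢) hYi hi (ae_of_all _ hpt)
  filter_upwards [hmono, hce] with ω h1 h2
  refine h1.trans ?_
  rw [h2]
  have h3 : ∑ k ∈ Finset.range 7, C k ω * ∫ x, x ^ k ∂(gaussianReal 0 Δ.toNNReal)
    = ‖X ω‖ ^ p * ∑ k ∈ Finset.range 7, coefC r1 r2 r3 k (W (X ω)) * ∫ x, x ^ k ∂(gaussianReal 0 Δ.toNNReal) := by
    rw [Finset.mul_sum]
    refine Finset.sum_congr rfl fun k _ => ?_
    simp only [hC]; ring
  rw [h3, mul_comm (1 - p * (lam - ε) * Δ)]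
  by_cases hx : X ω = 0
  · simp [hx, Real.zero_rpow hp0.ne']
  refine mul_le_mul_of_nonneg_left ?_ (by positivity)
  have h4 := coefC_mom r1 r2 r3 (W (X ω)).1 (W (X ω)).2.1 (W (X ω)).2.2 Δ.toNNReal
  rw [Real.coe_toNNReal _ hΔ.le] at h4
  refine h4.le.trans ?_
  refine (arith hΔ hK hKΔ (bα (X ω)) (bA0 _) (bA _) (bβ _) (bc _) (bB0 _) (bB _) hp0 hp1
    _ _ _ rfl rfl rfl).trans ?_
  have h5 : α (X ω) + B (X ω) ^ 2 / 2 + (p - 2) / 2 * β (X ω) ^ 2 ≤ -lam := by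
    refine le_trans (le_of_eq ?_) (hPhi (X ω) hx)
    have : 0 < ‖X ω‖ := norm_pos_iff.2 hx
    simp only [hα, hβ, hB, Phi]
    field_simp
  have h6 := mul_le_mul_of_nonneg_left h5 (show 0 ≤ p * Δ by positivity)
  have h7 := mul_le_mul_of_nonneg_left hKε (show 0 ≤ p * Δ by positivity)
  nlinarith

theorem stmt15 {d : ℕ} (hd : 1 ≤ d)
    (f g : EuclideanSpace ℝ (Fin d) → EuclideanSpace ℝ (Fin d))
    (hf0 : f 0 = 0) (hg0 : g 0 = 0)
    (L : ℝ → ℝ) (hLpos : ∀ R > (0:ℝ), 0 < L R) (hLmono : MonotoneOn L (Set.Ioi 0))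
    (hlip : ∀ R > (0:ℝ), ∀ x y : EuclideanSpace ℝ (Fin d), ‖x‖ ≤ R → ‖y‖ ≤ R →
      ‖f x - f y‖ ⊔ ‖g x - g y‖ ≤ L R * ‖x - y‖)
    (p lam : ℝ) (hp : p ∈ Set.Ioo (0:ℝ) 1) (hlam : 0 < lam)
    (hPhi : ∀ x : EuclideanSpace ℝ (Fin d), x ≠ 0 → Phi f g p x ≤ -lam)
    (Δ₀ : ℝ) (hΔ₀ : 0 < Δ₀) (h : ℝ → ℝ)
    (hhpos : ∀ Δ ∈ Set.Ioc (0:ℝ) Δ₀, 0 < h Δ)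
    (hhdec : AntitoneOn h (Set.Ioc 0 Δ₀))
    (hhinf : Tendsto h (nhdsWithin 0 (Set.Ioc 0 Δ₀)) atTop)
    (hLh : Tendsto (fun Δ => L (h Δ) ^ 4 * Δ) (nhdsWithin 0 (Set.Ioc 0 Δ₀)) (nhds 0)) :
    ∀ ε ∈ Set.Ioo 0 lam, ∃ Δs ∈ Set.Ioc (0:ℝ) Δ₀, ∀ Δ ∈ Set.Ioo (0:ℝ) Δs,
      ∀ (Ω : Type) [mΩ : MeasurableSpace Ω] (P : Measure Ω) [IsProbabilityMeasure P]
        (𝒢 : MeasurableSpace Ω), 𝒢 ≤ mΩ →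
      ∀ X : Ω → EuclideanSpace ℝ (Fin d), Measurable[𝒢] X →
        Integrable (fun ω => ‖X ω‖ ^ p) P →
      ∀ ξ : Ω → ℝ, Measurable[mΩ] ξ →
        @Measure.map Ω ℝ mΩ Real.measurableSpace ξ P = gaussianReal 0 (Real.toNNReal Δ) →
        Indep (MeasurableSpace.comap ξ Real.measurableSpace) 𝒢 P →
        ∀ᵐ ω ∂P,
          (P[fun ω' => ‖X ω' + Δ • trunc f (h Δ) (X ω') + ξ ω' • trunc g (h Δ) (X ω')‖ ^ p | 𝒢]) ω
            ≤ (1 - p * (lam - ε) * Δ) * ‖X ω‖ ^ p := by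
  intro ε hε
  have hL1 : ∀ᶠ Δ in nhdsWithin 0 (Set.Ioc 0 Δ₀), L (h Δ) ^ 4 * Δ < min 1 (ε / 68) :=
    hLh.eventually_lt_const (by have := hε.1; positivity)
  have hL2 : ∀ᶠ Δ in nhdsWithin (0:ℝ) (Set.Ioc 0 Δ₀), Δ < min 1 (ε / 68) :=
    (tendsto_id.mono_right nhdsWithin_le_nhds).eventually_lt_const (by have := hε.1; positivity)
  obtain ⟨δ, hδ, hδ'⟩ := Metric.mem_nhdsWithin_iff.1 (hL1.and hL2)
  refine ⟨min δ Δ₀, ⟨lt_min hδ hΔ₀, min_le_right _ _⟩, ?_⟩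
  intro Δ hΔ Ω mΩ P _ 𝒢 hle X hX hXi ξ hξ hmap hind
  have hΔ0 : 0 < Δ := hΔ.1
  have hΔmem : Δ ∈ Set.Ioc 0 Δ₀ := ⟨hΔ0, (hΔ.2.trans_le (min_le_right _ _)).le⟩
  obtain ⟨g1, g2⟩ := hδ' ⟨by
    rw [Metric.mem_ball, Real.dist_eq, sub_zero, abs_of_pos hΔ0]
    exact hΔ.2.trans_le (min_le_left _ _), hΔmem⟩
  have hh : 0 < h Δ := hhpos Δ hΔmem
  have hK : (max (L (h Δ)) 1) ^ 4 * Δ < min 1 (ε / 68) := by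
    rcases max_choice (L (h Δ)) 1 with e | e <;> rw [e]
    · exact g1
    · simpa using g2
  have hcont : ∀ F : EuclideanSpace ℝ (Fin d) → EuclideanSpace ℝ (Fin d),
      (∀ R > (0:ℝ), ∀ x y, ‖x‖ ≤ R → ‖y‖ ≤ R → ‖F x - F y‖ ≤ L R * ‖x - y‖) → Continuous F := by
    intro F hF
    rw [continuous_iff_continuousAt]
    intro x
    have hR : 0 < ‖x‖ + 1 := by positivity
    have hlo : LipschitzOnWith (L (‖x‖ + 1)).toNNReal F (Metric.closedBall 0 (‖x‖ + 1)) := by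
      refine LipschitzOnWith.of_dist_le_mul fun y hy z hz => ?_
      rw [Real.coe_toNNReal _ (hLpos _ hR).le, dist_eq_norm, dist_eq_norm]
      exact hF _ hR y z (by simpa using hy) (by simpa using hz)
    refine hlo.continuousOn.continuousAt (Metric.closedBall_mem_nhds_of_mem ?_)
    simp
  have hcf := hcont f fun R hR x y hx hy => (le_max_left _ _).trans (hlip R hR x y hx hy)
  have hcg := hcont g fun R hR x y hx hy => (le_max_right _ _).trans (hlip R hR x y hx hy)
  have hbf : ∀ x, ‖trunc f (h Δ) x‖ ≤ max (L (h Δ)) 1 * ‖x‖ := by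
    refine trunc_bound f (h Δ) _ hh fun x hx => ?_
    have := (le_max_left _ _).trans (hlip _ hh x 0 hx (by simpa using hh.le))
    rw [hf0, sub_zero, sub_zero] at this
    exact this.trans (by gcongr; exact le_max_left _ _)
  have hbg : ∀ x, ‖trunc g (h Δ) x‖ ≤ max (L (h Δ)) 1 * ‖x‖ := by
    refine trunc_bound g (h Δ) _ hh fun x hx => ?_
    have := (le_max_right _ _).trans (hlip _ hh x 0 hx (by simpa using hh.le))
    rw [hg0, sub_zero, sub_zero] at this
    exact this.trans (by gcongr; exact le_max_left _ _)
  have k1 := hK.trans_le (min_le_left _ _)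
  have k2 := hK.trans_le (min_le_right _ _)
  exact one_step (trunc f (h Δ)) (trunc g (h Δ)) (trunc_meas f _ hcf.measurable)
    (trunc_meas g _ hcg.measurable) (max (L (h Δ)) 1) Δ p lam ε (le_max_right _ _) hΔ0 k1.le
    (by linarith) hp.1 hp.2 hbf hbg (fun x hx => Phi_trunc f g (h Δ) p lam hh hPhi x hx)
    Ω (mΩ := mΩ) P 𝒢 hle X hX hXi ξ hξ hmap hind
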